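/- The set ACG*([a,b]) of generalized absolutely continuous (in the restricted sense) functions is a coanalytic subset of the Polish space C[a,b], but it is not a Borel subset of C[a,b]. -/

import Mathlib

open MeasureTheory Set Filter

noncomputable section

attribute [local instance] Classical.propDecidable

/-- The oscillation `ω(F, J)` of `F` on the set `J`. -/
def osc (F : ℝ → ℝ) (J : Set ℝ) : ℝ :=
  sSup {d : ℝ | ∃ x ∈ J, ∃ y ∈ J, d = |F x - F y|}

/-- `D` is a `K`-edged pre-partition of `[a,b]`: a finite nonempty collection of
pairwise non-overlapping closed subintervals of `[a,b]` whose endpoints lie in `K`. -/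
def IsPrePartition (a b : ℝ) (K : Set ℝ) (D : Finset (ℝ × ℝ)) : Prop :=
  D.Nonempty ∧
  (∀ p ∈ D, p.1 ≤ p.2 ∧ p.1 ∈ K ∧ p.2 ∈ K ∧ Icc p.1 p.2 ⊆ Icc a b) ∧
  (D : Set (ℝ × ℝ)).Pairwise fun p q => p.2 ≤ q.1 ∨ q.2 ≤ p.1

/-- `F ∈ AC_*(K)`: absolute continuity in the restricted sense on `K`. -/
def ACStar (a b : ℝ) (F : ℝ → ℝ) (K : Set ℝ) : Prop :=
  ∀ ε > (0:ℝ), ∃ δ > (0:ℝ), ∀ D : Finset (ℝ × ℝ), IsPrePartition a b K D →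
    (∑ p ∈ D, (p.2 - p.1)) < δ → (∑ p ∈ D, osc F (Icc p.1 p.2)) < ε

/-- `F ∈ ACG_*(K)`: `K` is a countable union of closed sets `Kₙ ⊆ [a,b]` with `F ∈ AC_*(Kₙ)`. -/
def ACGStar (a b : ℝ) (F : ℝ → ℝ) (K : Set ℝ) : Prop :=
  ∃ C : ℕ → Set ℝ, (∀ n, IsClosed (C n) ∧ C n ⊆ Icc a b ∧ ACStar a b F (C n)) ∧
    K = ⋃ n, C n

/-- `F` is the indefinite Denjoy integral of `f` on `[a,b]`:
`F` is continuous on `[a,b]`, `F(a) = 0`, `F ∈ ACG_*([a,b])`, and `F' = f` a.e. on `[a,b]`. -/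
def HasDenjoyIntegralFn (a b : ℝ) (f F : ℝ → ℝ) : Prop :=
  ContinuousOn F (Icc a b) ∧ F a = 0 ∧ ACGStar a b F (Icc a b) ∧
    ∀ᵐ x ∂(volume.restrict (Icc a b)), HasDerivAt F (f x) x

/-- `f ∈ Den[a,b]`: `f` is Denjoy integrable on `[a,b]`. -/
def DenjoyIntegrable (a b : ℝ) (f : ℝ → ℝ) : Prop :=
  ∃ F : ℝ → ℝ, HasDenjoyIntegralFn a b f F

/-- The Denjoy integral `∫_a^b f` (junk value `0` if `f` is not Denjoy integrable). -/
def denjoyIntegral (a b : ℝ) (f : ℝ → ℝ) : ℝ :=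
  if h : DenjoyIntegrable a b f then Classical.choose h b else 0


/-! ### Basic facts about oscillation and `AC_*` -/

lemma le_osc {F : ℝ → ℝ} (hF : Continuous F) {u v x y : ℝ} (hx : x ∈ Icc u v) (hy : y ∈ Icc u v) :
    |F x - F y| ≤ osc F (Icc u v) := by
  refine le_csSup ?_ ⟨x, hx, y, hy, rfl⟩
  have hc : IsCompact ((fun p : ℝ × ℝ => |F p.1 - F p.2|) '' (Icc u v ×ˢ Icc u v)) :=
    (isCompact_Icc.prod isCompact_Icc).image (by fun_prop)
  refine hc.bddAbove.mono ?_
  rintro d ⟨x, hx, y, hy, rfl⟩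
  exact ⟨(x, y), ⟨hx, hy⟩, rfl⟩

lemma osc_le {F : ℝ → ℝ} {u v L : ℝ} (huv : u ≤ v)
    (h : ∀ x ∈ Icc u v, ∀ y ∈ Icc u v, |F x - F y| ≤ L) : osc F (Icc u v) ≤ L := by
  refine csSup_le ⟨_, u, left_mem_Icc.2 huv, u, left_mem_Icc.2 huv, rfl⟩ ?_
  rintro d ⟨x, hx, y, hy, rfl⟩
  exact h x hx y hy

lemma ACStar.mono {a b : ℝ} {F : ℝ → ℝ} {K L : Set ℝ} (h : ACStar a b F L) (hKL : K ⊆ L) :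
    ACStar a b F K := by
  intro ε hε
  obtain ⟨δ, hδ, H⟩ := h ε hε
  refine ⟨δ, hδ, fun D hD => H D ⟨hD.1, fun p hp => ?_, hD.2.2⟩⟩
  obtain ⟨h1, h2, h3, h4⟩ := hD.2.1 p hp
  exact ⟨h1, hKL h2, hKL h3, h4⟩

lemma acStar_empty {a b : ℝ} {F : ℝ → ℝ} : ACStar a b F ∅ := by
  intro ε hε
  refine ⟨1, one_pos, fun D hD => ?_⟩
  obtain ⟨p, hp⟩ := hD.1
  exact absurd (hD.2.1 p hp).2.1 (by simp)

lemma acStar_of_lipschitz {a b : ℝ} {F : ℝ → ℝ} {u v L : ℝ}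
    (h : ∀ x ∈ Icc u v, ∀ y ∈ Icc u v, |F x - F y| ≤ L * |x - y|) :
    ACStar a b F (Icc u v) := by
  intro ε hε
  have hL : 0 < |L| + 1 := by positivity
  refine ⟨ε / (|L| + 1), by positivity, fun D hD hlt => ?_⟩
  have h1 : ∑ p ∈ D, osc F (Icc p.1 p.2) ≤ ∑ p ∈ D, (|L| + 1) * (p.2 - p.1) := by
    refine Finset.sum_le_sum fun p hp => ?_
    obtain ⟨h1, h2, h3, h4⟩ := hD.2.1 p hp
    refine osc_le h1 fun x hx y hy => ?_
    have hxy : |x - y| ≤ p.2 - p.1 := by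
      rw [abs_le]; constructor <;> linarith [hx.1, hx.2, hy.1, hy.2]
    calc |F x - F y| ≤ L * |x - y| :=
          h x ⟨h2.1.trans hx.1, hx.2.trans h3.2⟩ y ⟨h2.1.trans hy.1, hy.2.trans h3.2⟩
      _ ≤ (|L| + 1) * |x - y| := by
          gcongr; linarith [le_abs_self L]
      _ ≤ _ := by gcongr
  rw [← Finset.mul_sum] at h1
  refine h1.trans_lt ?_
  rwa [lt_div_iff₀' hL] at hlt

lemma acgStar_of_countable {a b : ℝ} {F : ℝ → ℝ} {𝒞 : Set (Set ℝ)} (hc : 𝒞.Countable)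
    (h : ∀ C ∈ 𝒞, IsClosed C ∧ C ⊆ Icc a b ∧ ACStar a b F C) (hcov : Icc a b ⊆ ⋃₀ 𝒞) :
    ACGStar a b F (Icc a b) := by
  obtain ⟨f, hf⟩ := (hc.insert ∅).exists_eq_range ⟨∅, by simp⟩
  have hf' : ∀ n, f n = ∅ ∨ f n ∈ 𝒞 := fun n => by
    have : f n ∈ insert ∅ 𝒞 := hf ▸ mem_range_self n
    simpa using this
  have hP : ∀ n, IsClosed (f n) ∧ f n ⊆ Icc a b ∧ ACStar a b F (f n) := by
    intro n
    rcases hf' n with h0 | h0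
    · rw [h0]; exact ⟨isClosed_empty, by simp, acStar_empty⟩
    · exact h _ h0
  refine ⟨f, hP, ?_⟩
  apply Subset.antisymm
  · intro x hx
    obtain ⟨C, hC, hxC⟩ := hcov hx
    have : C ∈ range f := hf ▸ mem_insert_of_mem _ hC
    obtain ⟨n, rfl⟩ := this
    exact mem_iUnion.2 ⟨n, hxC⟩
  · exact iUnion_subset fun n => (hP n).2.1

/-- Baire category direction. -/
lemma not_acgStar_of_set {a b : ℝ} {F : ℝ → ℝ} {E : Set ℝ} (hE : E.Nonempty) (hEs : E ⊆ Icc a b)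
    (h : ∀ p q : ℚ, ∀ e ∈ E, (p : ℝ) < e → e < q → ¬ ACStar a b F (E ∩ Icc (p : ℝ) q)) :
    ¬ ACGStar a b F (Icc a b) := by
  rintro ⟨C, hC, hU⟩
  have hcl : closure E ⊆ Icc a b := closure_minimal hEs isClosed_Icc
  have hne : Nonempty (closure E) := hE.closure.to_subtype
  have : CompleteSpace (closure E) := isClosed_closure.completeSpace_coe
  obtain ⟨n, x, hx⟩ := nonempty_interior_of_iUnion_of_closed
    (f := fun n => ((↑) : closure E → ℝ) ⁻¹' C n)
    (fun n => (hC n).1.preimage continuous_subtype_val) (by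
      rw [← preimage_iUnion, ← hU]
      exact eq_univ_of_forall fun x => hcl x.2)
  obtain ⟨U, hUs, hUo, hxU⟩ := mem_interior.1 hx
  obtain ⟨V, hVo, rfl⟩ := isOpen_induced_iff.1 hUo
  obtain ⟨e, heV, heE⟩ := mem_closure_iff.1 x.2 V hVo hxU
  obtain ⟨l, u, ⟨hl, hu⟩, hlu⟩ := mem_nhds_iff_exists_Ioo_subset.1 (hVo.mem_nhds heV)
  obtain ⟨p, hp1, hp2⟩ := exists_rat_btwn hl
  obtain ⟨q, hq1, hq2⟩ := exists_rat_btwn hu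
  refine h p q e heE hp2 hq1 ((hC n).2.2.mono ?_)
  rintro y ⟨hyE, hy⟩
  exact hUs (a := ⟨y, subset_closure hyE⟩) (hlu ⟨hp1.trans_le hy.1, hy.2.trans_lt hq2⟩)

/-- Cantor–Bendixson style direction. -/
lemma exists_closed_of_not_acgStar {a b : ℝ} {F : ℝ → ℝ} (h : ¬ ACGStar a b F (Icc a b)) :
    ∃ P : Set ℝ, P.Nonempty ∧ P ⊆ Icc a b ∧ ∀ p q : ℚ, (P ∩ Ioo (p : ℝ) q).Nonempty →
      ¬ ACStar a b F (P ∩ Icc (p : ℝ) q) := by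
  let good : ℚ × ℚ → Set (Set ℝ) → Prop := fun r 𝒞 => 𝒞.Countable ∧
    (∀ C ∈ 𝒞, IsClosed C ∧ C ⊆ Icc a b ∧ ACStar a b F C) ∧ Icc a b ∩ Ioo (r.1 : ℝ) r.2 ⊆ ⋃₀ 𝒞
  let G : Set (ℚ × ℚ) := {r | ∃ 𝒞, good r 𝒞}
  choose! cov hcov using fun (r : ℚ × ℚ) (hr : r ∈ G) => hr
  let 𝒟 : Set (Set ℝ) := ⋃ r ∈ G, cov r
  have h𝒟c : 𝒟.Countable := (to_countable G).biUnion fun r hr => (hcov r hr).1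
  have h𝒟 : ∀ C ∈ 𝒟, IsClosed C ∧ C ⊆ Icc a b ∧ ACStar a b F C := by
    intro C hC
    obtain ⟨r, hr, hC⟩ := mem_iUnion₂.1 hC
    exact (hcov r hr).2.1 C hC
  let P : Set ℝ := Icc a b \ ⋃ r ∈ G, Ioo (r.1 : ℝ) r.2
  have hPc : IsClosed P := isClosed_Icc.sdiff (isOpen_biUnion fun _ _ => isOpen_Ioo)
  have hcovP : Icc a b \ P ⊆ ⋃₀ 𝒟 := by
    rintro x ⟨hx, hxP⟩
    have : x ∈ ⋃ r ∈ G, Ioo (r.1 : ℝ) r.2 := by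
      by_contra hn; exact hxP ⟨hx, hn⟩
    obtain ⟨r, hr, hxr⟩ := mem_iUnion₂.1 this
    obtain ⟨C, hC, hxC⟩ := (hcov r hr).2.2 ⟨hx, hxr⟩
    exact ⟨C, mem_iUnion₂.2 ⟨r, hr, hC⟩, hxC⟩
  refine ⟨P, ?_, sdiff_subset, ?_⟩
  · by_contra hne
    rw [not_nonempty_iff_eq_empty] at hne
    rw [hne, sdiff_empty] at hcovP
    exact h (acgStar_of_countable h𝒟c h𝒟 hcovP)
  · rintro p q ⟨x, hxP, hx⟩ hAC
    have : (p, q) ∈ G := by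
      refine ⟨insert (P ∩ Icc (p : ℝ) q) 𝒟, h𝒟c.insert _, ?_, ?_⟩
      · rintro C (rfl | hC)
        · exact ⟨hPc.inter isClosed_Icc, inter_subset_left.trans sdiff_subset, hAC⟩
        · exact h𝒟 C hC
      · rintro y ⟨hy, hy'⟩
        by_cases hyP : y ∈ P
        · exact ⟨_, mem_insert _ _, hyP, Ioo_subset_Icc_self hy'⟩
        · obtain ⟨C, hC, hyC⟩ := hcovP ⟨hy, hyP⟩
          exact ⟨C, mem_insert_of_mem _ hC, hyC⟩
    exact hxP.2 (mem_iUnion₂.2 ⟨_, this, hx⟩)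

lemma not_acStar_iff {a b : ℝ} {F : ℝ → ℝ} {K : Set ℝ} :
    ¬ ACStar a b F K ↔ ∃ ε : ℚ, 0 < ε ∧ ∀ m : ℕ, ∃ D, IsPrePartition a b K D ∧
      (∑ p ∈ D, (p.2 - p.1)) < 1 / ((m : ℝ) + 1) ∧ (ε : ℝ) ≤ ∑ p ∈ D, osc F (Icc p.1 p.2) := by
  unfold ACStar
  push Not
  constructor
  · rintro ⟨ε, hε, h⟩
    obtain ⟨r, hr0, hr⟩ := exists_rat_btwn hε
    refine ⟨r, by exact_mod_cast hr0, fun m => ?_⟩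
    obtain ⟨D, h1, h2, h3⟩ := h (1 / ((m : ℝ) + 1)) (by positivity)
    exact ⟨D, h1, h2, hr.le.trans h3⟩
  · rintro ⟨ε, hε, h⟩
    refine ⟨ε, by exact_mod_cast hε, fun δ hδ => ?_⟩
    obtain ⟨m, hm⟩ := exists_nat_one_div_lt hδ
    obtain ⟨D, h1, h2, h3⟩ := h m
    exact ⟨D, h1, h2.trans hm, h3⟩

/-- The existential witness may be taken to be a sequence. -/
lemma exists_seq_of_not_acgStar {a b : ℝ} {F : ℝ → ℝ} (h : ¬ ACGStar a b F (Icc a b)) :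
    ∃ x : ℕ → Icc a b, ∀ p q : ℚ, ∀ n, (p : ℝ) < x n → (x n : ℝ) < q →
      ¬ ACStar a b F (range (fun n => (x n : ℝ)) ∩ Icc (p : ℝ) q) := by
  obtain ⟨P, ⟨x₀, hx₀⟩, hPs, hP⟩ := exists_closed_of_not_acgStar h
  simp only [not_acStar_iff] at hP
  choose ε hε D hD hDl hDo using hP
  let E : Set ℝ := insert x₀ (⋃ (p : ℚ) (q : ℚ) (hpq : (P ∩ Ioo (p : ℝ) q).Nonempty) (m : ℕ),
    ⋃ d ∈ D p q hpq m, {d.1, d.2})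
  have hEc : E.Countable := by
    refine Countable.insert _ ?_
    refine countable_iUnion fun p => countable_iUnion fun q => countable_iUnion fun hpq =>
      countable_iUnion fun m => ?_
    exact (Finset.countable_toSet (D p q hpq m)).biUnion fun d _ => to_countable _
  have hEP : E ⊆ P := by
    rintro y (rfl | hy)
    · exact hx₀
    · simp only [mem_iUnion] at hy
      obtain ⟨p, q, hpq, m, d, hd, hy⟩ := hy
      have := (hD p q hpq m).2.1 d hd
      rcases hy with rfl | rfl
      · exact this.2.1.1
      · exact this.2.2.1.1
  obtain ⟨f, hf⟩ := hEc.exists_eq_range ⟨x₀, mem_insert _ _⟩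
  have hfE : ∀ n, f n ∈ E := fun n => hf ▸ mem_range_self n
  refine ⟨fun n => ⟨f n, hPs (hEP (hfE n))⟩, fun p q n hp hq => ?_⟩
  have hpq : (P ∩ Ioo (p : ℝ) q).Nonempty := ⟨f n, hEP (hfE n), hp, hq⟩
  have hr : range (fun n => ((⟨f n, hPs (hEP (hfE n))⟩ : Icc a b) : ℝ)) = E := hf.symm
  rw [hr, not_acStar_iff]
  refine ⟨ε p q hpq, hε p q hpq, fun m => ⟨D p q hpq m, ?_, hDl p q hpq m, hDo p q hpq m⟩⟩
  refine ⟨(hD p q hpq m).1, fun d hd => ?_, (hD p q hpq m).2.2⟩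
  obtain ⟨h1, h2, h3, h4⟩ := (hD p q hpq m).2.1 d hd
  have hm : ∀ y, y = d.1 ∨ y = d.2 → y ∈ E := by
    intro y hy
    refine mem_insert_of_mem _ ?_
    simp only [mem_iUnion]
    exact ⟨p, q, hpq, m, d, hd, by simpa using hy⟩
  exact ⟨h1, ⟨hm _ (Or.inl rfl), h2.2⟩, ⟨hm _ (Or.inr rfl), h3.2⟩, h4⟩

/-- A continuous expression for the oscillation. -/
def oscC (F : ℝ → ℝ) (u v : ℝ) : ℝ :=
  sSup ((fun r : ℝ × ℝ => |F (u + r.1 * (v - u)) - F (u + r.2 * (v - u))|) ''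
    (Icc 0 1 ×ˢ Icc 0 1))

lemma osc_eq_oscC {F : ℝ → ℝ} {u v : ℝ} (huv : u ≤ v) : osc F (Icc u v) = oscC F u v := by
  have key : ∀ x ∈ Icc u v, ∃ r ∈ Icc (0:ℝ) 1, u + r * (v - u) = x := by
    intro x hx
    rcases huv.eq_or_lt with rfl | hlt
    · exact ⟨0, by simp, by linarith [hx.1, hx.2]⟩
    · have : 0 < v - u := sub_pos.2 hlt
      refine ⟨(x - u) / (v - u), ⟨div_nonneg (by linarith [hx.1]) this.le, ?_⟩, ?_⟩
      · rw [div_le_one this]; linarith [hx.2]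
      · field_simp; ring
  have key2 : ∀ r ∈ Icc (0:ℝ) 1, u + r * (v - u) ∈ Icc u v := by
    rintro r ⟨h0, h1⟩
    have : 0 ≤ v - u := sub_nonneg.2 huv
    constructor <;> nlinarith
  unfold osc oscC
  congr 1
  ext d
  constructor
  · rintro ⟨x, hx, y, hy, rfl⟩
    obtain ⟨r, hr, rfl⟩ := key x hx
    obtain ⟨s, hs, rfl⟩ := key y hy
    exact ⟨(r, s), ⟨hr, hs⟩, rfl⟩
  · rintro ⟨⟨r, s⟩, ⟨hr, hs⟩, rfl⟩
    exact ⟨_, key2 r hr, _, key2 s hs, rfl⟩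

/-- The matrix of the `Σ¹₁` definition. -/
def wit (a b : ℝ) (hab : a ≤ b) : Set ((ℕ → Icc a b) × C(Icc a b, ℝ)) :=
  {z | ∀ p q : ℚ, ∀ n, (p : ℝ) < z.1 n → (z.1 n : ℝ) < q → ∃ ε : ℚ, 0 < ε ∧ ∀ m : ℕ,
    ∃ D : Finset (ℕ × ℕ), D.Nonempty ∧
      (∀ d : ℕ × ℕ, d ∈ D → (z.1 d.1 : ℝ) ≤ z.1 d.2 ∧ ((p : ℝ) ≤ z.1 d.1) ∧ (z.1 d.2 : ℝ) ≤ q) ∧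
      (∀ d : ℕ × ℕ, ∀ e : ℕ × ℕ, d ∈ D → e ∈ D → d ≠ e →
        ((z.1 d.2 : ℝ) ≤ z.1 e.1 ∨ (z.1 e.2 : ℝ) ≤ z.1 d.1) ∧
        ¬ ((z.1 d.1 : ℝ) = z.1 e.1 ∧ (z.1 d.2 : ℝ) = z.1 e.2)) ∧
      (∑ d ∈ D, ((z.1 d.2 : ℝ) - z.1 d.1)) < 1 / ((m : ℝ) + 1) ∧
      (ε : ℝ) ≤ ∑ d ∈ D, oscC (fun x => z.2 (projIcc a b hab x)) (z.1 d.1) (z.1 d.2)}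

lemma measurableSet_wit (a b : ℝ) (hab : a ≤ b) : MeasurableSet[borel _] (wit a b hab) := by
  let _ : MeasurableSpace ((ℕ → Icc a b) × C(Icc a b, ℝ)) := borel _
  have : BorelSpace ((ℕ → Icc a b) × C(Icc a b, ℝ)) := ⟨rfl⟩
  have hx : ∀ n, Continuous fun z : (ℕ → Icc a b) × C(Icc a b, ℝ) => (z.1 n : ℝ) := by
    intro n; fun_prop
  have ho : ∀ i j, Continuous fun z : (ℕ → Icc a b) × C(Icc a b, ℝ) =>
      oscC (fun x => z.2 (projIcc a b hab x)) (z.1 i) (z.1 j) := by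
    intro i j
    unfold oscC
    refine IsCompact.continuous_sSup (isCompact_Icc.prod isCompact_Icc) (f := fun
      (z : (ℕ → Icc a b) × C(Icc a b, ℝ)) (r : ℝ × ℝ) =>
        |z.2 (projIcc a b hab ((z.1 i : ℝ) + r.1 * ((z.1 j : ℝ) - z.1 i))) -
         z.2 (projIcc a b hab ((z.1 i : ℝ) + r.2 * ((z.1 j : ℝ) - z.1 i)))|) ?_
    have hp : Continuous (projIcc a b hab) := continuous_projIcc
    simp only [Function.HasUncurry.uncurry, id]
    have hev : Continuous fun w : C(Icc a b, ℝ) × Icc a b => w.1 w.2 := by fun_prop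
    refine continuous_abs.comp (Continuous.sub ?_ ?_)
    · exact hev.comp (Continuous.prodMk (by fun_prop) (hp.comp (by fun_prop)))
    · exact hev.comp (Continuous.prodMk (by fun_prop) (hp.comp (by fun_prop)))
  have hlt : ∀ {f g : (ℕ → Icc a b) × C(Icc a b, ℝ) → ℝ}, Continuous f → Continuous g →
      Measurable fun z => f z < g z := fun hf hg =>
    measurableSet_setOfPred.1 (isOpen_lt hf hg).measurableSet
  have hle : ∀ {f g : (ℕ → Icc a b) × C(Icc a b, ℝ) → ℝ}, Continuous f → Continuous g →
      Measurable fun z => f z ≤ g z := fun hf hg =>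
    measurableSet_setOfPred.1 (isClosed_le hf hg).measurableSet
  have heq : ∀ {f g : (ℕ → Icc a b) × C(Icc a b, ℝ) → ℝ}, Continuous f → Continuous g →
      Measurable fun z => f z = g z := fun hf hg =>
    measurableSet_setOfPred.1 (isClosed_eq hf hg).measurableSet
  refine measurableSet_setOfPred.2 ?_
  refine Measurable.forall fun p => Measurable.forall fun q => Measurable.forall fun n =>
    (hlt continuous_const (hx n)).imp <| (hlt (hx n) continuous_const).imp <|
    Measurable.exists fun ε => measurable_const.and <| Measurable.forall fun m =>
    Measurable.exists fun D => measurable_const.and <| Measurable.and ?_ <| Measurable.and ?_ <|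
    Measurable.and ?_ ?_
  · refine Measurable.forall fun d => measurable_const.imp ?_
    exact (hle (hx _) (hx _)).and ((hle continuous_const (hx _)).and (hle (hx _) continuous_const))
  · refine Measurable.forall fun d => Measurable.forall fun e => measurable_const.imp <|
      measurable_const.imp <| measurable_const.imp ?_
    exact ((hle (hx _) (hx _)).or (hle (hx _) (hx _))).and
      ((heq (hx _) (hx _)).and (heq (hx _) (hx _))).not
  · exact hlt (continuous_finsetSum _ fun d _ => (hx _).sub (hx _)) continuous_const
  · exact hle continuous_const (continuous_finsetSum _ fun d _ => ho _ _)

lemma compl_eq_image (a b : ℝ) (hab : a ≤ b) :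
    {F : C(Icc a b, ℝ) | ACGStar a b (fun x => F (projIcc a b hab x)) (Icc a b)}ᶜ =
      Prod.snd '' wit a b hab := by
  ext F
  simp only [mem_compl_iff, mem_ofPred_eq, mem_image, Prod.exists, exists_eq_right]
  constructor
  · intro h
    obtain ⟨x, hx⟩ := exists_seq_of_not_acgStar h
    refine ⟨x, fun p q n hp hq => ?_⟩
    obtain ⟨ε, hε, H⟩ := not_acStar_iff.1 (hx p q n hp hq)
    refine ⟨ε, hε, fun m => ?_⟩
    obtain ⟨D, ⟨hne, hD, hpw⟩, hl, ho⟩ := H m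
    have : ∀ y : ℝ, ∃ n : ℕ, y ∈ range (fun n => (x n : ℝ)) → (x n : ℝ) = y := by
      intro y
      by_cases hy : y ∈ range (fun n => (x n : ℝ))
      · obtain ⟨n, hn⟩ := hy; exact ⟨n, fun _ => hn⟩
      · exact ⟨0, fun h => absurd h hy⟩
    choose g hg using this
    have hg1 : ∀ d ∈ D, (x (g d.1) : ℝ) = d.1 := fun d hd => hg _ (hD d hd).2.1.1
    have hg2 : ∀ d ∈ D, (x (g d.2) : ℝ) = d.2 := fun d hd => hg _ (hD d hd).2.2.1.1
    have hinj : Set.InjOn (fun d : ℝ × ℝ => (g d.1, g d.2)) D := by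
      intro d hd e he hde
      simp only [Prod.mk.injEq] at hde
      ext
      · rw [← hg1 d hd, ← hg1 e he, hde.1]
      · rw [← hg2 d hd, ← hg2 e he, hde.2]
    refine ⟨D.image fun d => (g d.1, g d.2), hne.image _, ?_, ?_, ?_, ?_⟩
    · intro d hd0
      obtain ⟨d, hd, rfl⟩ := Finset.mem_image.1 hd0
      simp only [hg1 d hd, hg2 d hd]
      exact ⟨(hD d hd).1, (hD d hd).2.1.2.1, (hD d hd).2.2.1.2.2⟩
    · intro d e hd0 he0 hde
      obtain ⟨d, hd, rfl⟩ := Finset.mem_image.1 hd0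
      obtain ⟨e, he, rfl⟩ := Finset.mem_image.1 he0
      simp only [hg1 d hd, hg2 d hd, hg1 e he, hg2 e he]
      have hne : d ≠ e := fun h => hde (by rw [h])
      exact ⟨hpw hd he hne, fun h => hne (Prod.ext h.1 h.2)⟩
    · rw [Finset.sum_image hinj]
      refine lt_of_eq_of_lt (Finset.sum_congr rfl fun d hd => ?_) hl
      simp only [hg1 d hd, hg2 d hd]
    · rw [Finset.sum_image hinj]
      refine ho.trans_eq (Finset.sum_congr rfl fun d hd => ?_)
      simp only [hg1 d hd, hg2 d hd]
      exact osc_eq_oscC (hD d hd).1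
  · rintro ⟨x, hx⟩
    refine not_acgStar_of_set (E := range (fun n => (x n : ℝ))) (range_nonempty _) ?_ ?_
    · rintro _ ⟨n, rfl⟩; exact (x n).2
    · rintro p q _ ⟨n, rfl⟩ hp hq
      obtain ⟨ε, hε, H⟩ := hx p q n hp hq
      refine not_acStar_iff.2 ⟨ε, hε, fun m => ?_⟩
      obtain ⟨D, hne, hD, hpw, hl, ho⟩ := H m
      have hinj : Set.InjOn (fun d : ℕ × ℕ => ((x d.1 : ℝ), (x d.2 : ℝ))) D := by
        intro d hd e he hde
        by_contra hne
        exact (hpw d e hd he hne).2 (by simpa using hde)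
      refine ⟨D.image fun d => ((x d.1 : ℝ), (x d.2 : ℝ)), ⟨hne.image _, ?_, ?_⟩, ?_, ?_⟩
      · intro d hd0
        obtain ⟨d, hd, rfl⟩ := Finset.mem_image.1 hd0
        obtain ⟨h1, h2, h3⟩ := hD d hd
        exact ⟨h1, ⟨⟨_, rfl⟩, h2, h1.trans h3⟩, ⟨⟨_, rfl⟩, h2.trans h1, h3⟩,
          Icc_subset_Icc (x d.1).2.1 (x d.2).2.2⟩
      · intro d hd0 e he0 hde
        obtain ⟨d, hd, rfl⟩ := Finset.mem_image.1 hd0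
        obtain ⟨e, he, rfl⟩ := Finset.mem_image.1 he0
        exact (hpw d e hd he fun h => hde (by rw [h])).1
      · rw [Finset.sum_image hinj]; exact hl
      · rw [Finset.sum_image hinj]
        refine ho.trans_eq (Finset.sum_congr rfl fun d hd => ?_)
        exact (osc_eq_oscC (hD d hd).1).symm

lemma analytic_part (a b : ℝ) (hab : a ≤ b) :
    AnalyticSet {F : C(Icc a b, ℝ) |
        ACGStar a b (fun x => F (projIcc a b hab x)) (Icc a b)}ᶜ := by
  rw [compl_eq_image]
  let _ : MeasurableSpace ((ℕ → Icc a b) × C(Icc a b, ℝ)) := borel _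
  have : BorelSpace ((ℕ → Icc a b) × C(Icc a b, ℝ)) := ⟨rfl⟩
  exact (measurableSet_wit a b hab).analyticSet.image_of_continuous continuous_snd


/-! ### A coanalytic non-analytic set by diagonalisation -/

/-- The initial segment of length `n`. -/
def ini (y : ℕ → ℕ) (n : ℕ) : List ℕ := (List.range n).map y

lemma ini_succ (y : ℕ → ℕ) (n : ℕ) : ini y (n + 1) = ini y n ++ [y n] := by
  simp [ini, List.range_succ]

lemma ini_length (y : ℕ → ℕ) (n : ℕ) : (ini y n).length = n := by simp [ini]

lemma ini_take (y : ℕ → ℕ) {m n : ℕ} (h : m ≤ n) : (ini y n).take m = ini y m := by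
  simp [ini, ← List.map_take, List.take_range, min_eq_left h]

lemma ini_congr {x y : ℕ → ℕ} {n : ℕ} : ini x n = ini y n ↔ ∀ i < n, x i = y i := by
  simp [ini]

lemma ini_map (f : ℕ → ℕ) (y : ℕ → ℕ) (n : ℕ) : (ini y n).map f = ini (fun i => f (y i)) n := by
  simp [ini]

/-- The self-referential relation. -/
def relR (T : ℕ → ℕ) (s : List ℕ) : Prop := T (Encodable.encode (ini T s.length, s)) = 1

/-- The associated tree. -/
def treeS (T : ℕ → ℕ) (s : List ℕ) : Prop := ∀ n ≤ s.length, relR T (s.take n)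

/-- The set of parameters with an ill-founded tree. -/
def illF : Set (ℕ → ℕ) := {T | ∃ y : ℕ → ℕ, ∀ n, treeS T (ini y n)}

lemma mem_illF {T : ℕ → ℕ} : T ∈ illF ↔ ∃ y : ℕ → ℕ, ∀ n, relR T (ini y n) := by
  constructor
  · rintro ⟨y, hy⟩
    refine ⟨y, fun n => ?_⟩
    have := hy n n (by rw [ini_length])
    rwa [ini_take y le_rfl] at this
  · rintro ⟨y, hy⟩
    refine ⟨y, fun n m hm => ?_⟩
    rw [ini_length] at hm
    rw [ini_take y hm]
    exact hy m

lemma treeS_prefix {T : ℕ → ℕ} (s t : List ℕ) (h : treeS T (s ++ t)) : treeS T s := by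
  intro n hn
  have := h n (by simp; omega)
  rwa [List.take_append_of_le_length hn] at this

lemma not_analytic_compl_illF : ¬ AnalyticSet illFᶜ := by
  intro h
  rw [AnalyticSet] at h
  rcases h with h | ⟨f, hf, hr⟩
  · have : (fun _ => 0 : ℕ → ℕ) ∈ illFᶜ := by
      intro hm
      obtain ⟨y, hy⟩ := mem_illF.1 hm
      have := hy 0
      simp [relR] at this
    rw [h] at this
    exact this
  · let R : ℕ → ℕ := fun c => if ∃ z n, c = Encodable.encode (ini (f z) n, ini z n) then 1 else 0
    have hR : ∀ s : List ℕ, relR R s ↔ ∃ z, ini (f z) s.length = ini R s.length ∧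
        ini z s.length = s := by
      intro s
      unfold relR
      constructor
      · intro h1
        have h2 : ∃ z n, Encodable.encode (ini R s.length, s) =
            Encodable.encode (ini (f z) n, ini z n) := by
          by_contra hn
          have : R (Encodable.encode (ini R s.length, s)) = 0 := if_neg hn
          omega
        obtain ⟨z, n, hzn⟩ := h2
        have h3 := Encodable.encode_injective hzn
        simp only [Prod.mk.injEq] at h3
        have h4 : s.length = n := by rw [h3.2, ini_length]
        subst h4
        exact ⟨z, h3.1.symm, h3.2.symm⟩
      · rintro ⟨z, h1, h2⟩
        exact if_pos ⟨z, s.length, by rw [h1, h2]⟩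
    have key : R ∈ illF ↔ R ∈ range f := by
      rw [mem_illF]
      constructor
      · rintro ⟨y, hy⟩
        have h1 : ∀ n, ∃ z, ini (f z) n = ini R n ∧ ini z n = ini y n := by
          intro n
          obtain ⟨z, hz⟩ := (hR _).1 (hy n)
          rw [ini_length] at hz
          exact ⟨z, hz⟩
        choose z hz using h1
        have hlim : ∀ (u : ℕ → ℕ → ℕ) (v : ℕ → ℕ), (∀ n, ini (u n) n = ini v n) →
            Tendsto u atTop (nhds v) := by
          intro u v huv
          rw [tendsto_pi_nhds]
          intro i
          refine tendsto_const_nhds.congr' ?_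
          filter_upwards [eventually_gt_atTop i] with n hn
          exact (ini_congr.1 (huv n) i hn).symm
        have h2 := hlim z y fun n => (hz n).2
        have h3 := hlim (fun n => f (z n)) R fun n => (hz n).1
        have h4 := (hf.tendsto y).comp h2
        exact ⟨y, tendsto_nhds_unique h4 h3⟩
      · rintro ⟨z, hz⟩
        refine ⟨z, fun n => (hR _).2 ⟨z, by rw [hz], by rw [ini_length]⟩⟩
    rw [hr] at key
    by_cases h : R ∈ illF
    · exact (key.1 h) h
    · exact h (key.2 h)

lemma eventually_relR (T₀ : ℕ → ℕ) (s : List ℕ) : ∀ᶠ T in nhds T₀, (relR T s ↔ relR T₀ s) := by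
  have h : ∀ M : ℕ, ∀ᶠ T in nhds T₀, ∀ i ∈ Finset.range M, T i = T₀ i := by
    intro M
    rw [Filter.eventually_all_finset]
    intro i _
    have h1 : Tendsto (fun T : ℕ → ℕ => T i) (nhds T₀) (nhds (T₀ i)) :=
      (continuous_apply i).tendsto T₀
    rw [nhds_discrete ℕ, tendsto_pure] at h1
    exact h1
  filter_upwards [h s.length, h (Encodable.encode (ini T₀ s.length, s) + 1)] with T h1 h2
  have h3 : ini T s.length = ini T₀ s.length := ini_congr.2 fun i hi => h1 i (by simpa using hi)
  unfold relR
  rw [h3, h2 _ (by simp)]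

lemma eventually_treeS (T₀ : ℕ → ℕ) (s : List ℕ) :
    ∀ᶠ T in nhds T₀, (treeS T s ↔ treeS T₀ s) := by
  have : ∀ᶠ T in nhds T₀, ∀ n ∈ Finset.range (s.length + 1),
      (relR T (s.take n) ↔ relR T₀ (s.take n)) := by
    rw [Filter.eventually_all_finset]
    exact fun n _ => eventually_relR T₀ _
  filter_upwards [this] with T hT
  unfold treeS
  refine forall_congr' fun n => forall_congr' fun hn => hT n ?_
  simp; omega

/-! ### The geometry -/

/-- Blow-up of the `i`-th child. -/
def be (i : ℕ) (x : ℝ) : ℝ := (x - 1) * 2 ^ (i + 2) + 4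

/-- Inverse of `be`. -/
def al (i : ℕ) (y : ℝ) : ℝ := 1 + (y - 4) / 2 ^ (i + 2)

/-- Blow-up of the interval at a word. -/
def Bm : List ℕ → ℝ → ℝ
  | [], x => x
  | i :: t, x => Bm t (be i x)

/-- Inverse of `Bm`. -/
def Am : List ℕ → ℝ → ℝ
  | [], y => y
  | i :: t, y => al i (Am t y)

lemma be_al (i : ℕ) (y : ℝ) : be i (al i y) = y := by
  unfold be al; field_simp; ring

lemma al_be (i : ℕ) (y : ℝ) : al i (be i y) = y := by
  unfold be al; field_simp; ring

lemma Bm_Am (t : List ℕ) (y : ℝ) : Bm t (Am t y) = y := by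
  induction t with
  | nil => rfl
  | cons i t ih => simp [Bm, Am, be_al, ih]

lemma Am_Bm (t : List ℕ) (x : ℝ) : Am t (Bm t x) = x := by
  induction t generalizing x with
  | nil => rfl
  | cons i t ih => simp [Bm, Am, al_be, ih]

lemma Bm_append (s t : List ℕ) (x : ℝ) : Bm (s ++ t) x = Bm t (Bm s x) := by
  induction s generalizing x with
  | nil => rfl
  | cons i s ih => simp [Bm, ih]

lemma Am_append (s t : List ℕ) (x : ℝ) : Am (s ++ t) x = Am s (Am t x) := by
  induction s with
  | nil => rfl
  | cons i s ih => simp [Am, ih]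

lemma al_strictMono (i : ℕ) : StrictMono (al i) := by
  intro x y h
  unfold al
  have : (x - 4) / 2 ^ (i + 2) < (y - 4) / 2 ^ (i + 2) :=
    div_lt_div_of_pos_right (by linarith) (by positivity)
  linarith

lemma Am_strictMono (t : List ℕ) : StrictMono (Am t) := by
  induction t with
  | nil => exact strictMono_id
  | cons i t ih => exact (al_strictMono i).comp ih

lemma Am_continuous (t : List ℕ) : Continuous (Am t) := by
  induction t with
  | nil => exact continuous_id
  | cons i t ih =>
    have : Continuous (al i) := by unfold al; fun_prop
    exact this.comp ih

lemma Bm_continuous (t : List ℕ) : Continuous (Bm t) := by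
  induction t with
  | nil => exact continuous_id
  | cons i t ih =>
    have : Continuous (be i) := by unfold be; fun_prop
    exact ih.comp this

lemma Bm_affine (t : List ℕ) : ∃ c : ℝ, ∀ x y, Bm t x - Bm t y = c * (x - y) := by
  induction t with
  | nil => exact ⟨1, by simp [Bm]⟩
  | cons i t ih =>
    obtain ⟨c, hc⟩ := ih
    refine ⟨c * 2 ^ (i + 2), fun x y => ?_⟩
    simp only [Bm, hc, be]; ring

lemma Bm_le_iff (t : List ℕ) (x y : ℝ) : y ≤ Bm t x ↔ Am t y ≤ x := by
  rw [← (Am_strictMono t).le_iff_le, Am_Bm]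

lemma Bm_ge_iff (t : List ℕ) (x y : ℝ) : Bm t x ≤ y ↔ x ≤ Am t y := by
  rw [← (Am_strictMono t).le_iff_le, Am_Bm]

lemma four_le_pow (i : ℕ) : (4 : ℝ) ≤ 2 ^ (i + 2) := by
  have : (1 : ℝ) ≤ 2 ^ i := one_le_pow₀ (by norm_num)
  rw [pow_add]; linarith

lemma be_mem {i : ℕ} {x : ℝ} (h : be i x ∈ Ico (0:ℝ) 2) : x ∈ Ico (0:ℝ) 1 := by
  unfold be at h
  have h4 := four_le_pow i
  obtain ⟨h0, h1⟩ := h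
  constructor
  · by_contra hx; push Not at hx; nlinarith
  · by_contra hx; push Not at hx; nlinarith

lemma Bm_mem {t : List ℕ} {x : ℝ} (h : Bm t x ∈ Ico (0:ℝ) 2) : x ∈ Ico (0:ℝ) 2 := by
  induction t generalizing x with
  | nil => exact h
  | cons i t ih =>
    have := be_mem (ih h)
    exact ⟨this.1, by linarith [this.2]⟩

lemma be_unique {i j : ℕ} {x : ℝ} (hi : be i x ∈ Ico (0:ℝ) 2) (hj : be j x ∈ Ico (0:ℝ) 2) :
    i = j := by
  have key : ∀ i j : ℕ, i < j → be i x ∈ Ico (0:ℝ) 2 → be j x ∈ Ico (0:ℝ) 2 → False := by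
    intro i j hij hi hj
    have hx := (be_mem hi).2
    unfold be at hi hj
    have : (2:ℝ) * 2 ^ (i + 2) ≤ 2 ^ (j + 2) := by
      rw [← pow_succ']
      exact pow_le_pow_right₀ (by norm_num) (by omega)
    nlinarith [hi.2, hj.1]
  rcases lt_trichotomy i j with h | h | h
  · exact (key i j h hi hj).elim
  · exact h
  · exact (key j i h hj hi).elim

lemma be_exists {x : ℝ} (hx : x ∈ Ico (0:ℝ) 1) : ∃ i, be i x ∈ Ico (0:ℝ) 2 := by
  have hz : 0 < 1 - x := by linarith [hx.2]
  have h1 : 1 ≤ 1 / (1 - x) := by rw [le_div_iff₀ hz]; linarith [hx.1]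
  obtain ⟨n, hn1, hn2⟩ := exists_nat_pow_near h1 (one_lt_two)
  rw [le_div_iff₀ hz] at hn1
  rw [div_lt_iff₀ hz] at hn2
  refine ⟨n, ?_⟩
  unfold be
  rw [pow_succ] at hn2
  rw [pow_add]
  constructor <;> nlinarith

/-- The tent supported in `(1,2)`. -/
def tent (x : ℝ) : ℝ := max 0 (1 - |2 * x - 3|)

lemma tent_nonneg (x : ℝ) : 0 ≤ tent x := le_max_left _ _

lemma tent_le_one (x : ℝ) : tent x ≤ 1 := by
  unfold tent
  exact max_le zero_le_one (by linarith [abs_nonneg (2 * x - 3)])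

lemma tent_one : tent 1 = 0 := by unfold tent; norm_num

lemma tent_peak : tent (3/2) = 1 := by unfold tent; norm_num

lemma tent_continuous : Continuous tent := by unfold tent; fun_prop

lemma tent_supp {x : ℝ} (h : tent x ≠ 0) : 1 < x ∧ x < 2 := by
  have h1 : 0 < 1 - |2 * x - 3| := by
    by_contra hn
    exact h (max_eq_left (not_lt.1 hn))
  have h2 : |2 * x - 3| < 1 := by linarith
  rw [abs_lt] at h2
  constructor <;> linarith

lemma tent_lip (x y : ℝ) : |tent x - tent y| ≤ 2 * |x - y| := by
  unfold tent
  have h1 := abs_max_sub_max_le_abs (1 - |2 * x - 3|) (1 - |2 * y - 3|) 0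
  rw [max_comm 0, max_comm 0]
  refine h1.trans ?_
  have h2 : 1 - |2 * x - 3| - (1 - |2 * y - 3|) = |2 * y - 3| - |2 * x - 3| := by ring
  rw [h2]
  refine (abs_abs_sub_abs_le_abs_sub _ _).trans ?_
  have h3 : 2 * y - 3 - (2 * x - 3) = 2 * (y - x) := by ring
  rw [h3, abs_mul, abs_two, abs_sub_comm]

/-- Core disjointness lemma. -/
lemma prefix_of_supp {v w : List ℕ} {x : ℝ} (hv : Bm v x ∈ Ico (0:ℝ) 2)
    (hw : tent (Bm w x) ≠ 0) : v <+: w := by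
  induction v generalizing w x with
  | nil => exact List.nil_prefix
  | cons i v ih =>
    have h1 := Bm_mem (t := v) hv
    cases w with
    | nil =>
      have := tent_supp hw
      have h2 := be_mem h1
      simp only [Bm] at this
      linarith [this.1, h2.2]
    | cons j w =>
      have hs := tent_supp hw
      have h2 : Bm w (be j x) ∈ Ico (0:ℝ) 2 := ⟨by linarith [hs.1, show Bm (j :: w) x = Bm w (be j x) from rfl], hs.2⟩
      have h3 := Bm_mem h2
      have hij := be_unique h1 h3
      subst hij
      exact (List.prefix_cons_inj i).2 (ih hv hw)

lemma eq_of_supp_gap {v w : List ℕ} {x : ℝ} (hv : Bm v x ∈ Ico (1:ℝ) 2)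
    (hw : tent (Bm w x) ≠ 0) : w = v := by
  obtain ⟨r, rfl⟩ := prefix_of_supp ⟨by linarith [hv.1], hv.2⟩ hw
  cases r with
  | nil => simp
  | cons i r =>
    have hs := tent_supp hw
    rw [Bm_append] at hs
    have h1 : Bm r (be i (Bm v x)) ∈ Ico (0:ℝ) 2 := ⟨by
      have : Bm (i :: r) (Bm v x) = Bm r (be i (Bm v x)) := rfl
      linarith [hs.1], hs.2⟩
    have h2 := be_mem (Bm_mem h1)
    linarith [h2.2, hv.1]

lemma eq_of_supp {v w : List ℕ} {x : ℝ} (hv : tent (Bm v x) ≠ 0)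
    (hw : tent (Bm w x) ≠ 0) : w = v :=
  eq_of_supp_gap ⟨(tent_supp hv).1.le, (tent_supp hv).2⟩ hw

/-! ### The function -/

/-- Weight of a word. -/
def wt : List ℕ → ℕ
  | [] => 0
  | i :: t => (Nat.unpair i).1 + (Nat.unpair i).2 + 1 + wt t

lemma wt_append (s t : List ℕ) : wt (s ++ t) = wt s + wt t := by
  induction s with
  | nil => simp [wt]
  | cons i s ih => simp [wt, ih]; ring

lemma wt_finite (n : ℕ) : {w | wt w ≤ n}.Finite := by
  induction n with
  | zero =>
    refine (finite_singleton ([] : List ℕ)).subset ?_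
    intro w hw
    cases w with
    | nil => simp
    | cons i t => simp [wt] at hw
  | succ n ih =>
    have hfin : (image2 Nat.pair (Iic n) (Iic n)).Finite :=
      (finite_Iic n).image2 _ (finite_Iic n)
    refine ((hfin.image2 List.cons ih).insert []).subset ?_
    intro w hw
    cases w with
    | nil => simp
    | cons i t =>
      have hw' : (Nat.unpair i).1 + (Nat.unpair i).2 + 1 + wt t ≤ n + 1 := hw
      refine mem_insert_of_mem _ ⟨i, ⟨(Nat.unpair i).1, ?_, (Nat.unpair i).2, ?_, Nat.pair_unpair i⟩,
        t, ?_, rfl⟩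
      · simp only [mem_Iic]; omega
      · simp only [mem_Iic]; omega
      · show wt t ≤ n
        omega

/-- Label of a child index. -/
def lab (i : ℕ) : ℕ := (Nat.unpair i).1

/-- Coefficients. -/
def co (S : List ℕ → Prop) (w : List ℕ) : ℝ := if S (w.map lab) then 1 / ((wt w : ℝ) + 1) else 0

lemma co_nonneg (S : List ℕ → Prop) (w : List ℕ) : 0 ≤ co S w := by
  unfold co; split_ifs <;> positivity

lemma co_le (S : List ℕ → Prop) (w : List ℕ) : co S w ≤ 1 / ((wt w : ℝ) + 1) := by
  unfold co; split_ifs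
  · exact le_rfl
  · positivity

/-- The function attached to a tree. -/
def Phi (S : List ℕ → Prop) (x : ℝ) : ℝ := ∑' w, co S w * tent (Bm w x)

lemma Phi_eq {S : List ℕ → Prop} {x : ℝ} (w : List ℕ)
    (h : ∀ v, tent (Bm v x) ≠ 0 → v = w) : Phi S x = co S w * tent (Bm w x) := by
  refine tsum_eq_single w fun v hv => ?_
  have : tent (Bm v x) = 0 := by
    by_contra hn; exact hv (h v hn)
  rw [this, mul_zero]

lemma Phi_approx (S : List ℕ → Prop) (x : ℝ) (n : ℕ) :
    |Phi S x - ∑ w ∈ (wt_finite n).toFinset, co S w * tent (Bm w x)| ≤ 1 / ((n : ℝ) + 1) := by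
  by_cases h : ∃ w, tent (Bm w x) ≠ 0
  · obtain ⟨w, hw⟩ := h
    rw [Phi_eq w fun v hv => eq_of_supp hw hv]
    have h0 : ∀ v, v ≠ w → co S v * tent (Bm v x) = 0 := by
      intro v hv
      have : tent (Bm v x) = 0 := by
        by_contra hn; exact hv (eq_of_supp hw hn)
      rw [this, mul_zero]
    by_cases hwn : wt w ≤ n
    · rw [Finset.sum_eq_single w (fun v _ hv => h0 v hv) (fun hn => absurd (by simpa using hwn) hn)]
      simp; positivity
    · rw [Finset.sum_eq_zero fun v hv => h0 v ?_]
      · rw [sub_zero, abs_of_nonneg (mul_nonneg (co_nonneg _ _) (tent_nonneg _))]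
        calc co S w * tent (Bm w x) ≤ co S w * 1 := by
              gcongr
              · exact co_nonneg _ _
              · exact tent_le_one _
          _ ≤ 1 / ((wt w : ℝ) + 1) := by rw [mul_one]; exact co_le _ _
          _ ≤ _ := by
              have : (n : ℝ) ≤ wt w := by exact_mod_cast (not_le.1 hwn).le
              gcongr
      · rintro rfl
        exact hwn (by simpa using hv)
  · push Not at h
    have : Phi S x = 0 := by simp [Phi, h]
    rw [this]
    simp [h]; positivity

lemma co_continuous (w : List ℕ) : Continuous fun T : ℕ → ℕ => co (treeS T) w := by
  rw [continuous_iff_continuousAt]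
  intro T₀
  refine ContinuousAt.congr (continuousAt_const (y := co (treeS T₀) w)) ?_
  filter_upwards [eventually_treeS T₀ (w.map lab)] with T hT
  simp only [co, hT]

lemma Phi_continuous : Continuous fun z : (ℕ → ℕ) × ℝ => Phi (treeS z.1) z.2 := by
  refine continuous_of_uniform_approx_of_continuous fun u hu => ?_
  obtain ⟨ε, hε, hεu⟩ := Metric.mem_uniformity_dist.1 hu
  obtain ⟨n, hn⟩ := exists_nat_one_div_lt hε
  refine ⟨fun z => ∑ w ∈ (wt_finite n).toFinset, co (treeS z.1) w * tent (Bm w z.2), ?_, ?_⟩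
  · refine continuous_finsetSum _ fun w _ => ?_
    exact ((co_continuous w).comp continuous_fst).mul
      (tent_continuous.comp ((Bm_continuous w).comp continuous_snd))
  · intro z
    apply hεu
    rw [Real.dist_eq]
    exact (Phi_approx _ _ n).trans_lt hn


lemma Phi_gap {T : ℕ → ℕ} (v : List ℕ) {y : ℝ} (hy : y ∈ Icc (1:ℝ) 2) :
    Phi (treeS T) (Am v y) = co (treeS T) v * tent y := by
  have hc1 : Continuous fun y => Phi (treeS T) (Am v y) :=
    Phi_continuous.comp (continuous_const.prodMk (Am_continuous v))
  have hc2 : Continuous fun y => co (treeS T) v * tent y := continuous_const.mul tent_continuous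
  have he : EqOn (fun y => Phi (treeS T) (Am v y)) (fun y => co (treeS T) v * tent y)
      (Ico 1 2) := by
    intro y hy
    simp only
    rw [Phi_eq v, Bm_Am]
    intro w hw
    exact eq_of_supp_gap (by rw [Bm_Am]; exact hy) hw
  have := he.closure hc1 hc2
  rw [closure_Ico (by norm_num)] at this
  exact this hy

lemma Phi_core {T : ℕ → ℕ} (v : List ℕ) (hv : ¬ treeS T (v.map lab)) {y : ℝ}
    (hy : y ∈ Icc (0:ℝ) 1) : Phi (treeS T) (Am v y) = 0 := by
  have hc1 : Continuous fun y => Phi (treeS T) (Am v y) :=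
    Phi_continuous.comp (continuous_const.prodMk (Am_continuous v))
  have he : EqOn (fun y => Phi (treeS T) (Am v y)) (fun _ => 0) (Ico 0 1) := by
    intro y hy
    have : ∀ w, co (treeS T) w * tent (Bm w (Am v y)) = 0 := by
      intro w
      by_cases hw : tent (Bm w (Am v y)) = 0
      · rw [hw, mul_zero]
      · obtain ⟨r, rfl⟩ := prefix_of_supp (v := v) (by
          rw [Bm_Am]; exact ⟨hy.1, by linarith [hy.2]⟩) hw
        have : co (treeS T) (v ++ r) = 0 := by
          unfold co
          rw [if_neg]
          rw [List.map_append]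
          exact fun h => hv (treeS_prefix _ _ h)
        rw [this, zero_mul]
    simp [Phi, this]
  have := he.closure hc1 continuous_const
  rw [closure_Ico (by norm_num)] at this
  exact this hy

section final

variable {a b : ℝ}

lemma acg_of_wf (hab : a < b) {T : ℕ → ℕ} (hT : T ∉ illF) {F : ℝ → ℝ}
    (hF : ∀ x ∈ Icc a b, F x = Phi (treeS T) ((x - a) / (b - a))) :
    ACGStar a b F (Icc a b) := by
  have hba : 0 < b - a := sub_pos.2 hab
  let m : ℝ → ℝ := fun z => a + (b - a) * z
  have hm : ∀ x, m ((x - a) / (b - a)) = x := by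
    intro x; simp only [m]; field_simp; ring
  have hmono : StrictMono m := by
    intro x y h; simp only [m]; gcongr
  have hgapx : ∀ (v : List ℕ) (y₁ y₂ x : ℝ), x ∈ Icc (m (Am v y₁)) (m (Am v y₂)) ↔
      Bm v ((x - a) / (b - a)) ∈ Icc y₁ y₂ := by
    intro v y₁ y₂ x
    rw [mem_Icc, mem_Icc, Bm_le_iff, Bm_ge_iff]
    have h1 := hmono.le_iff_le (a := Am v y₁) (b := (x - a) / (b - a))
    have h2 := hmono.le_iff_le (a := (x - a) / (b - a)) (b := Am v y₂)
    rw [hm] at h1 h2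
    rw [h1, h2]
  let 𝒞 : Set (Set ℝ) := {Icc b b} ∪
    (range (fun v => Icc (m (Am v 1)) (m (Am v 2)) ∩ Icc a b) ∪
    (fun v => Icc (m (Am v 0)) (m (Am v 1)) ∩ Icc a b) '' {v | ¬ treeS T (v.map lab)})
  have hcount : 𝒞.Countable :=
    (countable_singleton _).union ((countable_range _).union ((to_countable _).image _))
  refine acgStar_of_countable hcount ?_ ?_
  · rintro C (rfl | ⟨v, rfl⟩ | ⟨v, hv, rfl⟩)
    · refine ⟨isClosed_Icc, Icc_subset_Icc_left hab.le, acStar_of_lipschitz (L := 0) ?_⟩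
      intro x hx y hy
      rw [Icc_self, mem_singleton_iff] at hx hy
      simp [hx, hy]
    · refine ⟨isClosed_Icc.inter isClosed_Icc, inter_subset_right, ?_⟩
      simp only
      obtain ⟨c, hc⟩ := Bm_affine v
      have hval : ∀ x ∈ Icc (m (Am v 1)) (m (Am v 2)) ∩ Icc a b,
          F x = co (treeS T) v * tent (Bm v ((x - a) / (b - a))) := by
        rintro x ⟨hx1, hx2⟩
        rw [hF x hx2, ← Phi_gap v ((hgapx v 1 2 x).1 hx1), Am_Bm]
      rw [Icc_inter_Icc] at hval ⊢
      refine acStar_of_lipschitz (L := co (treeS T) v * (2 * (|c| / (b - a)))) ?_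
      intro x hx y hy
      rw [hval x hx, hval y hy, ← mul_sub, abs_mul, abs_of_nonneg (co_nonneg _ _), mul_assoc]
      refine mul_le_mul_of_nonneg_left ?_ (co_nonneg _ _)
      refine (tent_lip _ _).trans ?_
      rw [hc, mul_assoc, abs_mul]
      have : (x - a) / (b - a) - (y - a) / (b - a) = (x - y) / (b - a) := by field_simp; ring
      rw [this, abs_div, abs_of_pos hba]
      apply le_of_eq; ring
    · refine ⟨isClosed_Icc.inter isClosed_Icc, inter_subset_right, ?_⟩
      simp only
      have hval : ∀ x ∈ Icc (m (Am v 0)) (m (Am v 1)) ∩ Icc a b, F x = 0 := by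
        rintro x ⟨hx1, hx2⟩
        rw [hF x hx2, ← Am_Bm v ((x - a) / (b - a))]
        exact Phi_core v hv ((hgapx v 0 1 x).1 hx1)
      rw [Icc_inter_Icc] at hval ⊢
      refine acStar_of_lipschitz (L := 0) ?_
      intro x hx y hy
      rw [hval x hx, hval y hy]; simp
  · intro x hx
    rcases eq_or_lt_of_le hx.2 with rfl | hxb
    · exact ⟨Icc x x, Or.inl rfl, by simp⟩
    set z := (x - a) / (b - a) with hz
    have hz01 : z ∈ Ico (0:ℝ) 1 := by
      constructor
      · exact div_nonneg (by linarith [hx.1]) hba.le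
      · rw [hz, div_lt_one hba]; linarith
    by_cases hgap : ∃ v, Bm v z ∈ Ico (1:ℝ) 2
    · obtain ⟨v, hv⟩ := hgap
      exact ⟨_, Or.inr (Or.inl ⟨v, rfl⟩), (hgapx v 1 2 x).2 (Ico_subset_Icc_self hv), hx⟩
    · push Not at hgap
      have step : ∀ v : List ℕ, ∃ i, Bm v z ∈ Ico (0:ℝ) 1 → Bm (v ++ [i]) z ∈ Ico (0:ℝ) 1 := by
        intro v
        by_cases hv : Bm v z ∈ Ico (0:ℝ) 1
        · obtain ⟨i, hi⟩ := be_exists hv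
          refine ⟨i, fun _ => ?_⟩
          have h1 := hgap (v ++ [i])
          rw [Bm_append] at h1 ⊢
          have h2 : Bm [i] (Bm v z) = be i (Bm v z) := rfl
          rw [h2] at h1 ⊢
          refine ⟨hi.1, ?_⟩
          by_contra hn
          exact h1 ⟨not_lt.1 hn, hi.2⟩
        · exact ⟨0, fun h => absurd h hv⟩
      choose nx hnx using step
      let wd : ℕ → List ℕ := fun n => Nat.rec [] (fun _ v => v ++ [nx v]) n
      have hwd : ∀ n, wd (n + 1) = wd n ++ [nx (wd n)] := fun n => rfl
      have hwini : ∀ n, wd n = ini (fun k => nx (wd k)) n := by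
        intro n
        induction n with
        | zero => rfl
        | succ n ih => rw [hwd, ini_succ, ← ih]
      have hin : ∀ n, Bm (wd n) z ∈ Ico (0:ℝ) 1 := by
        intro n
        induction n with
        | zero => exact hz01
        | succ n ih => rw [hwd]; exact hnx _ ih
      have hno : ∃ n, ¬ treeS T (ini (fun k => lab (nx (wd k))) n) := by
        by_contra hn
        push Not at hn
        exact hT ⟨_, hn⟩
      obtain ⟨n, hn⟩ := hno
      rw [← ini_map, ← hwini] at hn
      exact ⟨_, Or.inr (Or.inr ⟨wd n, hn, rfl⟩),
        (hgapx (wd n) 0 1 x).2 (Ico_subset_Icc_self (hin n)), hx⟩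

lemma harm (c J : ℕ) : ∃ N, J < N ∧ (1:ℝ) ≤ ∑ j ∈ Finset.Ico J N, 1 / (((c + j : ℕ) : ℝ) + 1) := by
  have h := Real.tendsto_sum_range_one_div_nat_succ_atTop
  obtain ⟨M, hM⟩ := (h.eventually_ge_atTop
    (1 + ∑ i ∈ Finset.range (c + J), 1 / ((i : ℝ) + 1))).and (eventually_gt_atTop (c + J)) |>.exists
  refine ⟨M - c, by omega, ?_⟩
  have h1 : ∑ j ∈ Finset.Ico J (M - c), 1 / (((c + j : ℕ) : ℝ) + 1) =
      ∑ i ∈ Finset.Ico (c + J) M, 1 / ((i : ℝ) + 1) := by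
    rw [Finset.sum_Ico_add (fun i : ℕ => 1 / ((i : ℝ) + 1)) J (M - c) c]
    congr 2 <;> omega
  rw [h1, Finset.sum_Ico_eq_sub _ hM.2.le]
  linarith [hM.1]

lemma al_le_al {i j : ℕ} (h : i < j) : al i 2 ≤ al j 1 := by
  unfold al
  have h1 : (2:ℝ) * 2 ^ (i + 2) ≤ 2 ^ (j + 2) := by
    rw [← pow_succ']
    exact pow_le_pow_right₀ (by norm_num) (by omega)
  have h2 : (0:ℝ) < 2 ^ (i + 2) := by positivity
  have h3 : (0:ℝ) < 2 ^ (j + 2) := by positivity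
  have : (2 - 4 : ℝ) / 2 ^ (i + 2) ≤ (1 - 4) / 2 ^ (j + 2) := by
    rw [div_le_div_iff₀ h2 h3]; linarith
  linarith

lemma al_lt_one (i : ℕ) : al i 1 < 1 := by
  unfold al
  have : (1 - 4 : ℝ) / 2 ^ (i + 2) < 0 := div_neg_of_neg_of_pos (by norm_num) (by positivity)
  linarith

lemma al_tendsto : Tendsto (fun i => al i 1) atTop (nhds 1) := by
  unfold al
  have h1 : Tendsto (fun i : ℕ => (2:ℝ) ^ (i + 2)) atTop atTop :=
    (tendsto_pow_atTop_atTop_of_one_lt one_lt_two).comp (tendsto_add_atTop_nat 2)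
  have h2 := (tendsto_const_nhds (x := (1 - 4 : ℝ))).div_atTop h1
  simpa using h2.const_add 1

lemma Am_one_mem (t : List ℕ) : Am t 1 ∈ Icc (0:ℝ) 1 := by
  induction t with
  | nil => simp [Am]
  | cons i t ih =>
    refine ⟨?_, ?_⟩
    · refine le_trans ?_ ((al_strictMono i).monotone ih.1)
      unfold al
      have := four_le_pow i
      have h2 : -1 ≤ (0 - 4 : ℝ) / 2 ^ (i + 2) := by
        rw [le_div_iff₀ (by positivity)]; linarith
      linarith
    · exact ((al_strictMono i).monotone ih.2).trans (al_lt_one i).le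

lemma not_acg_of_ill (hab : a < b) {T : ℕ → ℕ} (hT : T ∈ illF) {F : ℝ → ℝ} (hFc : Continuous F)
    (hF : ∀ x ∈ Icc a b, F x = Phi (treeS T) ((x - a) / (b - a))) :
    ¬ ACGStar a b F (Icc a b) := by
  obtain ⟨y, hy⟩ := hT
  have hba : 0 < b - a := sub_pos.2 hab
  let m : ℝ → ℝ := fun z => a + (b - a) * z
  have hmono : StrictMono m := by
    intro x y h; simp only [m]; gcongr
  have hmc : Continuous m := by fun_prop
  have hm01 : ∀ z ∈ Icc (0:ℝ) 1, m z ∈ Icc a b := by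
    intro z hz
    constructor
    · simp only [m]; nlinarith [hz.1]
    · simp only [m]; nlinarith [hz.2]
  have hFm : ∀ z ∈ Icc (0:ℝ) 1, F (m z) = Phi (treeS T) z := by
    intro z hz
    rw [hF _ (hm01 z hz)]
    congr 1
    simp only [m]; field_simp; ring
  let E : Set ℝ := {e | ∃ t : List ℕ, t.map lab = ini y t.length ∧ m (Am t 1) = e}
  refine not_acgStar_of_set (E := E) ⟨_, [], rfl, rfl⟩ ?_ ?_
  · rintro _ ⟨t, -, rfl⟩
    exact hm01 _ (Am_one_mem t)
  rintro p q _ ⟨t, ht, rfl⟩ hp hq hAC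
  set k := y t.length with hk
  let vj : ℕ → List ℕ := fun j => t ++ [Nat.pair k j]
  let e : ℕ → ℝ := fun j => m (Am (vj j) 1)
  have hvlab : ∀ j, (vj j).map lab = ini y (t.length + 1) := by
    intro j
    simp [vj, ht, ini_succ, lab, hk]
  have heE : ∀ j, e j ∈ E := fun j => ⟨vj j, by rw [hvlab]; simp [vj], rfl⟩
  have hA : ∀ j z, Am (vj j) z = Am t (al (Nat.pair k j) z) := by
    intro j z; simp only [vj, Am_append]; rfl
  have hpm : StrictMono (Nat.pair k) := fun i j h => Nat.pair_lt_pair_right k h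
  have hnext : ∀ j, m (Am (vj j) 2) ≤ e (j + 1) := by
    intro j
    apply hmono.monotone
    rw [hA, hA]
    exact (Am_strictMono t).monotone (al_le_al (hpm (Nat.lt_succ_self j)))
  have hlt12 : ∀ j, e j < m (Am (vj j) (3/2)) ∧ m (Am (vj j) (3/2)) < m (Am (vj j) 2) := fun j =>
    ⟨hmono (Am_strictMono _ (by norm_num)), hmono (Am_strictMono _ (by norm_num))⟩
  have hesm : StrictMono e := strictMono_nat_of_lt_succ fun j =>
    ((hlt12 j).1.trans (hlt12 j).2).trans_le (hnext j)
  have helt : ∀ j, e j < m (Am t 1) := by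
    intro j
    apply hmono
    rw [hA]
    exact Am_strictMono t (al_lt_one _)
  have helim : Tendsto e atTop (nhds (m (Am t 1))) := by
    have h1 : Tendsto (fun j => al (Nat.pair k j) 1) atTop (nhds 1) :=
      al_tendsto.comp hpm.tendsto_atTop
    have h2 := ((hmc.comp (Am_continuous t)).tendsto 1).comp h1
    refine h2.congr fun j => ?_
    simp only [Function.comp, e, hA]
  have hosc : ∀ j, 1 / (((wt t + k + 1 + j : ℕ) : ℝ) + 1) ≤ osc F (Icc (e j) (e (j + 1))) := by
    intro j
    have h0 := Am_one_mem (vj j)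
    have h1 := Am_one_mem (vj (j + 1))
    have hpk : Am (vj j) (3/2) ∈ Icc (0:ℝ) 1 := by
      refine ⟨h0.1.trans ((Am_strictMono _).monotone (by norm_num)), ?_⟩
      have := hmono.lt_iff_lt.1 ((hlt12 j).2.trans_le (hnext j))
      exact this.le.trans h1.2
    have hle := le_osc hFc (u := e j) (v := e (j + 1)) (x := m (Am (vj j) (3/2))) (y := e j)
      ⟨(hlt12 j).1.le, ((hlt12 j).2.trans_le (hnext j)).le⟩
      ⟨le_rfl, (hesm (Nat.lt_succ_self j)).le⟩
    rw [hFm _ hpk, hFm _ h0, Phi_gap _ (by norm_num), Phi_gap _ (by norm_num), tent_one,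
      tent_peak, mul_zero, sub_zero, mul_one, abs_of_nonneg (co_nonneg _ _)] at hle
    refine le_trans (le_of_eq ?_) hle
    unfold co
    rw [if_pos (by rw [hvlab]; exact hy _)]
    have : wt (vj j) = wt t + k + 1 + j := by
      simp [vj, wt_append, wt]; ring
    rw [this]
  obtain ⟨δ, hδ, H⟩ := hAC 1 one_pos
  obtain ⟨J, hJ⟩ : ∃ J, max (p : ℝ) (m (Am t 1) - δ) < e J :=
    (helim.eventually (lt_mem_nhds (max_lt hp (by linarith)))).exists
  obtain ⟨N, hJN, hN⟩ := harm (wt t + k + 1) J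
  have hinj : Function.Injective fun j => (e j, e (j + 1)) := by
    intro i j hij
    exact hesm.injective (Prod.mk.inj hij).1
  have := H ((Finset.Ico J N).image fun j => (e j, e (j + 1))) ⟨?_, ?_, ?_⟩ ?_
  · rw [Finset.sum_image hinj.injOn] at this
    have h2 := Finset.sum_le_sum fun j (_ : j ∈ Finset.Ico J N) => hosc j
    simp only at this
    linarith
  · exact (Finset.nonempty_Ico.2 hJN).image _
  · intro d hd
    obtain ⟨j, hj, rfl⟩ := Finset.mem_image.1 hd
    have hj1 := (Finset.mem_Ico.1 hj).1
    have hr : ∀ i, J ≤ i → e i ∈ E ∩ Icc (p : ℝ) q := fun i hi =>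
      ⟨heE i, ((le_max_left _ _).trans hJ.le).trans (hesm.monotone hi), ((helt i).trans hq).le⟩
    refine ⟨(hesm (Nat.lt_succ_self j)).le, hr _ hj1, hr _ (by omega), ?_⟩
    exact Icc_subset_Icc (hm01 _ (Am_one_mem _)).1 (hm01 _ (Am_one_mem _)).2
  · intro d hd d' hd' hne
    obtain ⟨i, hi, rfl⟩ := Finset.mem_image.1 hd
    obtain ⟨j, hj, rfl⟩ := Finset.mem_image.1 hd'
    rcases lt_trichotomy i j with h | h | h
    · exact Or.inl (hesm.monotone h)
    · exact absurd (by rw [h]) hne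
    · exact Or.inr (hesm.monotone h)
  · rw [Finset.sum_image hinj.injOn]
    simp only
    rw [Finset.sum_Ico_sub e hJN.le]
    have h3 := (le_max_right _ _).trans_lt hJ
    linarith [helt N]

end final

lemma not_borel_part (a b : ℝ) (hab : a < b) :
    ¬ MeasurableSet[borel C(Icc a b, ℝ)] {F : C(Icc a b, ℝ) |
        ACGStar a b (fun x => F (projIcc a b hab.le x)) (Icc a b)} := by
  intro hM
  let G : C((ℕ → ℕ) × Icc a b, ℝ) :=
    ⟨fun z => Phi (treeS z.1) (((z.2 : ℝ) - a) / (b - a)),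
      Phi_continuous.comp (continuous_fst.prodMk (by fun_prop))⟩
  have hpre : (fun T => G.curry T) ⁻¹' {F : C(Icc a b, ℝ) |
        ACGStar a b (fun x => F (projIcc a b hab.le x)) (Icc a b)} = illFᶜ := by
    ext T
    have hval : ∀ x ∈ Icc a b, (G.curry T) (projIcc a b hab.le x) =
        Phi (treeS T) ((x - a) / (b - a)) := by
      intro x hx
      rw [projIcc_of_mem hab.le hx]
      rfl
    have hc : Continuous fun x => (G.curry T) (projIcc a b hab.le x) :=
      (G.curry T).continuous.comp continuous_projIcc
    constructor
    · intro h hT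
      exact not_acg_of_ill hab hT hc hval h
    · intro h
      exact acg_of_wf hab h hval
  let _ : MeasurableSpace C(Icc a b, ℝ) := borel _
  have : BorelSpace C(Icc a b, ℝ) := ⟨rfl⟩
  have hmeas : Measurable fun T => G.curry T := G.curry.continuous.measurable
  have h1 : MeasurableSet (illFᶜ) := hpre ▸ hmeas hM
  exact not_analytic_compl_illF h1.analyticSet

/-- Theorem: `ACG_*([a,b])` is a coanalytic, non-Borel subset of `C[a,b]`. -/
theorem acgStar_coanalytic_not_borel (a b : ℝ) (hab : a < b) :
    AnalyticSet {F : C(Icc a b, ℝ) |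
        ACGStar a b (fun x => F (projIcc a b hab.le x)) (Icc a b)}ᶜ ∧
    ¬ MeasurableSet[borel C(Icc a b, ℝ)] {F : C(Icc a b, ℝ) |
        ACGStar a b (fun x => F (projIcc a b hab.le x)) (Icc a b)} := by
  exact ⟨analytic_part a b hab.le, not_borel_part a b hab⟩
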